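/- Let X ⊂ P^n be a non-singular quartic hypersurface with n ≥ 6. Then every geometrically integral component Φ ⊆ F_2(X) of the Fano variety of planes such that X = D(Φ) (i.e. X is swept out by the planes parametrised by Φ) satisfies dim Φ ≤ 3 if n = 6, and dim Φ ≤ 3n − 16 if n ≥ 7. -/

import Mathlib

noncomputable section

abbrev KK : Type := AlgebraicClosure ℚ

abbrev Pn (N : ℕ) := Projectivization KK (Fin (N + 1) → KK)

/-- The common zero set in projective space of a family of polynomials
(membership tested on the chosen representative). -/
def projZeros {N : ℕ} (S : Set (MvPolynomial (Fin (N + 1)) KK)) : Set (Pn N) :=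
  {x | ∀ f ∈ S, MvPolynomial.eval x.rep f = 0}

/-- Zariski-closed subsets of projective space: common zero sets of families of forms. -/
def ProjClosed {N : ℕ} (V : Set (Pn N)) : Prop :=
  ∃ S : Set (MvPolynomial (Fin (N + 1)) KK),
    (∀ f ∈ S, ∃ d, f.IsHomogeneous d) ∧ V = projZeros S

def ProjIrred {N : ℕ} (V : Set (Pn N)) : Prop :=
  V.Nonempty ∧ ∀ C₁ C₂ : Set (Pn N), ProjClosed C₁ → ProjClosed C₂ →
    V ⊆ C₁ ∪ C₂ → V ⊆ C₁ ∨ V ⊆ C₂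

/-- A (geometrically integral) projective variety: an irreducible Zariski-closed set. -/
def ProjVariety {N : ℕ} (V : Set (Pn N)) : Prop := ProjClosed V ∧ ProjIrred V

/-- Dimension of a subset of projective space: Krull dimension of the poset of
irreducible closed subsets contained in it. The empty set has dimension `⊥`. -/
def projDim {N : ℕ} (V : Set (Pn N)) : WithBot ENat :=
  Order.krullDim {W : Set (Pn N) // ProjVariety W ∧ W ⊆ V}

/-- The set of projective points lying on a linear subspace. -/
def planeSet {N : ℕ} (W : Submodule KK (Fin (N + 1) → KK)) : Set (Pn N) :=
  {x | x.rep ∈ W}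

/-- Degree of a subset of projective space: the largest (finite) number of points
in a linear section. -/
def projDeg {N : ℕ} (V : Set (Pn N)) : ℕ :=
  sSup {k : ℕ | ∃ W : Submodule KK (Fin (N + 1) → KK),
    (V ∩ planeSet W).Finite ∧ (V ∩ planeSet W).ncard = k}

/-- The hypersurface cut out by a form. -/
def hyp {n : ℕ} (F : MvPolynomial (Fin (n + 1)) KK) : Set (Pn n) :=
  {x | MvPolynomial.eval x.rep F = 0}

/-- A form over the algebraic closure is non-singular if its partial derivatives
have no common non-trivial zero. -/
def NonsingularK {n : ℕ} (F : MvPolynomial (Fin (n + 1)) KK) : Prop :=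
  ∀ z : Fin (n + 1) → KK,
    (∀ i, MvPolynomial.eval z (MvPolynomial.pderiv i F) = 0) → z = 0

/-- The Fano set of (projective) m-planes contained in X, as linear subspaces of
dimension m+1. -/
def Fano (m n : ℕ) (X : Set (Pn n)) : Set (Submodule KK (Fin (n + 1) → KK)) :=
  {W | Module.finrank KK W = m + 1 ∧ planeSet W ⊆ X}

/-- Closed subsets of the Grassmannian of m-planes in Pⁿ, described via Stiefel
coordinates: Z is closed iff the set of (m+1)-tuples of vectors which, when
linearly independent, span a member of Z, is Zariski-closed in affine space. -/
def GrClosed (m n : ℕ) (Z : Set (Submodule KK (Fin (n + 1) → KK))) : Prop :=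
  (∀ W ∈ Z, Module.finrank KK W = m + 1) ∧
  ∃ S : Set (MvPolynomial (Fin (m + 1) × Fin (n + 1)) KK),
    {v : Fin (m + 1) → Fin (n + 1) → KK |
      LinearIndependent KK v → Submodule.span KK (Set.range v) ∈ Z}
    = {v | ∀ f ∈ S, MvPolynomial.eval (fun p => v p.1 p.2) f = 0}

def GrIrred (m n : ℕ) (Z : Set (Submodule KK (Fin (n + 1) → KK))) : Prop :=
  Z.Nonempty ∧ ∀ C₁ C₂ : Set (Submodule KK (Fin (n + 1) → KK)),
    GrClosed m n C₁ → GrClosed m n C₂ → Z ⊆ C₁ ∪ C₂ → Z ⊆ C₁ ∨ Z ⊆ C₂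

/-- A (geometrically integral) subvariety of the Grassmannian. -/
def GrVariety (m n : ℕ) (Z : Set (Submodule KK (Fin (n + 1) → KK))) : Prop :=
  GrClosed m n Z ∧ GrIrred m n Z

/-- Dimension of a subset of the Grassmannian of m-planes in Pⁿ. -/
def grDim (m n : ℕ) (Z : Set (Submodule KK (Fin (n + 1) → KK))) : WithBot ENat :=
  Order.krullDim {W : Set (Submodule KK (Fin (n + 1) → KK)) // GrVariety m n W ∧ W ⊆ Z}

/-- D(Z): the union of the planes parametrised by Z. -/
def DSet {n : ℕ} (Z : Set (Submodule KK (Fin (n + 1) → KK))) : Set (Pn n) :=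
  {x | ∃ Λ ∈ Z, x.rep ∈ Λ}

/-- A primitive integer vector: the gcd of its coordinates is 1. -/
def IsPrimitiveVec {n : ℕ} (x : Fin n → ℤ) : Prop := Finset.univ.gcd x = 1

/-- Height of an integer vector: the maximum modulus of its coordinates. -/
def heightVec {n : ℕ} (x : Fin n → ℤ) : ℝ :=
  ((Finset.univ.sup fun i => (x i).natAbs : ℕ) : ℝ)

def coeK {n : ℕ} (x : Fin n → ℤ) : Fin n → KK := fun i => ((x i : ℤ) : KK)

def coeQ {n : ℕ} (x : Fin n → ℤ) : Fin n → ℚ := fun i => ((x i : ℤ) : ℚ)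

/-- The number of rational points of height at most B on a subset V of projective
space, counted via primitive integer vectors (each projective rational point
corresponds to exactly two primitive vectors). -/
def NV {n : ℕ} (V : Set (Pn n)) (B : ℝ) : ℕ :=
  Set.ncard {x : Fin (n + 1) → ℤ | IsPrimitiveVec x ∧ heightVec x ≤ B ∧
    ∃ h : coeK x ≠ 0, Projectivization.mk KK (coeK x) h ∈ V}

/-- An integer form is non-singular if its partial derivatives have no common
non-trivial zero over the algebraic closure of ℚ. -/
def NonsingularZ {n : ℕ} (F : MvPolynomial (Fin (n + 1)) ℤ) : Prop :=
  ∀ z : Fin (n + 1) → KK,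
    (∀ i, MvPolynomial.aeval z (MvPolynomial.pderiv i F) = 0) → z = 0

/-- Base change of an integer polynomial to the algebraic closure of ℚ. -/
def mapK {n : ℕ} (F : MvPolynomial (Fin (n + 1)) ℤ) : MvPolynomial (Fin (n + 1)) KK :=
  MvPolynomial.map (Int.castRingHom KK) F

/-- The Plücker height of the rational m-plane spanned by the integer vectors v:
the maximum modulus of the (m+1)×(m+1) minors, divided by their gcd. -/
def pluckerHeight {m n : ℕ} (v : Fin (m + 1) → Fin (n + 1) → ℤ) : ℕ :=
  (Finset.univ.sup fun s : Fin (m + 1) → Fin (n + 1) =>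
    (Matrix.det (Matrix.of fun i j => v i (s j))).natAbs) /
  (Finset.univ.gcd fun s : Fin (m + 1) → Fin (n + 1) =>
    (Matrix.det (Matrix.of fun i j => v i (s j))).natAbs)

def betaExp (k : ℕ) : ℝ := if k ≤ 3 then 0 else 1/4

def sigmaExp (n k : ℕ) : ℝ :=
  if (k : ℝ) ≤ ((n : ℝ) - 1) / 2 then (k : ℝ) + 1 else (k : ℝ) + betaExp k

def tauExp (n k : ℕ) : ℝ :=
  if (k : ℝ) < ((n : ℝ) - 1) / 2 then (k : ℝ) + 1 else (k : ℝ) + betaExp k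

/-- E: the union of the (n-1)/2-planes contained in X (for n odd; empty for n even). -/
def bigE {n : ℕ} (X : Set (Pn n)) : Set (Pn n) :=
  {x | n % 2 = 1 ∧ ∃ W : Submodule KK (Fin (n + 1) → KK),
    Module.finrank KK W = (n - 1) / 2 + 1 ∧ planeSet W ⊆ X ∧ x ∈ planeSet W}

/-- The cone of lines contained in X passing through x. -/
def coneOfLines {n : ℕ} (X : Set (Pn n)) (x : Pn n) : Set (Pn n) :=
  {y | ∃ L : Submodule KK (Fin (n + 1) → KK),
    Module.finrank KK L = 2 ∧ planeSet L ⊆ X ∧ x.rep ∈ L ∧ y.rep ∈ L}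

/-!
Let `L` be the function field of the variety of triples of vectors spanning a member of `Φ`, let
`v` be the generic triple and `Λ` the plane over `L` that it spans. The transcendence degree of `L`
is at least `dim Φ + 9` and equals the dimension of `Der_K(L)`. A derivation `D` moves `v` inside
`{F|_Λ = 0}`, so `D v` lies in the kernel of the first variation
`w ↦ ∑ a, X a * ∑ j, w a j • ∂_j F|_Λ`. The image of this map is `S₁ G`, where `S` is the polynomial
ring of `Λ` and `G` is spanned by the restrictions `∂_j F|_Λ`, so `dim Φ` is bounded above once
`dim S₁ G` is bounded below.

Since the planes cover `X`, all but one of the coordinates of the generic point `p` of `Λ` are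
algebraically independent. Hence every element `u` of `G` with `u(p) = 0` comes from a derivation,
and the vanishing of the first variation gives `X 2 * u ∈ X 0 * G + X 1 * G`. The Hilbert function
`h(t) = dim S_t G` therefore satisfies `h(t+2) + h(t) ≤ 2h(t+1) + 1`. Non-singularity says that the
elements of `G` have no common zero other than the origin, so with `e = deg F - 1` we have
`h(t) = (t+e+2).choose 2` for large `t`. So the second difference of `h` is at most `1`, with
equality for large `t`, and summing it up yields `h(0) > e + 1` and `h(1) ≥ h(0) + e + 2`.
Finally, the three rows of `v` are relations between the `∂_j F|_Λ`, so `h(0) ≤ n - 2`.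
-/

open MvPolynomial

theorem add_le_of_hilbert {h : ℕ → ℕ} {e N : ℕ}
    (hstep : ∀ t, h (t + 2) + h t ≤ 2 * h (t + 1) + 1)
    (hN : ∀ t ≥ N, h t = (t + e + 2).choose 2) : h 0 + (e + 2) ≤ h 1 := by
  have increment_le : ∀ k, h (k + 1) + h 0 ≤ h 1 + h k + k := by
    intro k
    induction k with
    | zero => lia
    | succ k ih => have := hstep k; lia
  have := increment_le N
  rw [hN N le_rfl, hN (N + 1) (by lia), show N + 1 + e + 2 = (N + e + 2) + 1 by ring,
    Nat.choose_succ_succ', Nat.choose_one_right] at this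
  lia

theorem lt_of_hilbert {h : ℕ → ℕ} {e N : ℕ} (he : 0 < e) (hzero : h 1 ≤ 2 * h 0 + 1)
    (hstep : ∀ t, h (t + 2) + h t ≤ 2 * h (t + 1) + 1)
    (hN : ∀ t ≥ N, h t = (t + e + 2).choose 2) : e + 1 < h 0 := by
  have increment_le : ∀ k, h (k + 1) ≤ h k + h 0 + (k + 1) := by
    intro k
    induction k with
    | zero => lia
    | succ k ih => have := hstep k; lia
  have le_quadratic : ∀ k, 2 * h k ≤ (k + 1) * (2 * h 0 + k) := by
    intro k
    induction k with
    | zero => simp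
    | succ k ih => have := increment_le k; nlinarith
  have hN' : 2 * h N = (N + e + 2) * (N + e + 1) := by
    rw [hN N le_rfl, Nat.choose_two_right, Nat.mul_div_cancel' (Nat.even_mul_pred_self _).two_dvd]
    rfl
  have := le_quadratic N
  by_contra! hle
  nlinarith

/-! ### Hilbert functions in three variables -/

section
open Submodule Module

section
variable {k R : Type*} [Field k] [CommRing R] [Algebra k R]

theorem finrank_add_finrank_inf_le {V : Type*} [AddCommGroup V] [Module k V]
    {A B W : Submodule k V} {w : V} [FiniteDimensional k A] [FiniteDimensional k B]
    (hW : W ≤ A ⊔ B ⊔ (k ∙ w)) :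
    finrank k W + finrank k (A ⊓ B : Submodule k V) ≤ finrank k A + finrank k B + 1 := by
  have hline : finrank k (k ∙ w) ≤ 1 := by simpa using finrank_span_le_card (R := k) {w}
  have hle := (finrank_mono hW).trans (finrank_add_le_finrank_add_finrank _ _)
  have := finrank_sup_add_finrank_inf_eq A B
  lia

theorem finrank_span_singleton_mul [IsDomain R] {a : R} (ha : a ≠ 0) (M : Submodule k R) :
    finrank k ((k ∙ a) * M : Submodule k R) = finrank k M := by
  rw [show (k ∙ a) * M = M.map (LinearMap.mulLeft k a) by
    ext; simp [mem_span_singleton_mul]]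
  exact (equivMapOfInjective _ (mul_right_injective₀ ha) M).finrank_eq.symm

theorem span_triple_mul (x y z : R) (M : Submodule k R) :
    span k {x, y, z} * M = (k ∙ x) * M ⊔ (k ∙ y) * M ⊔ (k ∙ z) * M := by
  rw [span_insert, span_insert, ← sup_assoc, Submodule.sup_mul, Submodule.sup_mul]

theorem pow_succ_span_triple_mul_le {x y z u : R} {G : Submodule k R}
    (hG : (k ∙ z) * G ≤ (k ∙ x) * G ⊔ (k ∙ y) * G ⊔ (k ∙ (z * u))) (t : ℕ) :
    span k {x, y, z} ^ (t + 1) * G ≤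
      (k ∙ x) * (span k {x, y, z} ^ t * G) ⊔ (k ∙ y) * (span k {x, y, z} ^ t * G) ⊔
        (k ∙ (z ^ (t + 1) * u)) := by
  have hz : (k ∙ z) ≤ span k {x, y, z} := span_mono (by simp)
  induction t with
  | zero =>
    simp only [zero_add, pow_one, pow_zero, one_mul, span_triple_mul]
    exact sup_le le_sup_left hG
  | succ t ih =>
    rw [pow_succ' _ (t + 1), mul_assoc, span_triple_mul]
    refine sup_le le_sup_left ?_
    set V := span k {x, y, z}
    calc (k ∙ z) * (V ^ (t + 1) * G)
        ≤ (k ∙ z) * ((k ∙ x) * (V ^ t * G) ⊔ (k ∙ y) * (V ^ t * G) ⊔ (k ∙ (z ^ (t + 1) * u))) := by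
          gcongr
      _ = (k ∙ x) * ((k ∙ z) * (V ^ t * G)) ⊔ (k ∙ y) * ((k ∙ z) * (V ^ t * G)) ⊔
            (k ∙ (z ^ (t + 2) * u)) := by
          rw [Submodule.mul_sup, Submodule.mul_sup, mul_left_comm (k ∙ z) (k ∙ x),
            mul_left_comm (k ∙ z) (k ∙ y), span_mul_span, Set.singleton_mul_singleton,
            ← mul_assoc z, ← pow_succ']
      _ ≤ _ := by
          rw [pow_succ' V, mul_assoc V]
          gcongr

variable [IsDomain R] {x y z u : R} {G : Submodule k R}

theorem finrank_pow_succ_span_triple_mul_add_finrank_inf_le (hx : x ≠ 0) (hy : y ≠ 0) (hfg : G.FG)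
    (hG : (k ∙ z) * G ≤ (k ∙ x) * G ⊔ (k ∙ y) * G ⊔ (k ∙ (z * u))) (t : ℕ) :
    finrank k (span k {x, y, z} ^ (t + 1) * G : Submodule k R) +
        finrank k ((k ∙ x) * (span k {x, y, z} ^ t * G) ⊓
          (k ∙ y) * (span k {x, y, z} ^ t * G) : Submodule k R) ≤
      2 * finrank k (span k {x, y, z} ^ t * G : Submodule k R) + 1 := by
  have hMfg : (span k {x, y, z} ^ t * G).FG := ((fg_span (by simp)).pow t).mul hfg
  have : FiniteDimensional k ((k ∙ x) * (span k {x, y, z} ^ t * G) : Submodule k R) :=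
    .of_fg ((fg_span_singleton x).mul hMfg)
  have : FiniteDimensional k ((k ∙ y) * (span k {x, y, z} ^ t * G) : Submodule k R) :=
    .of_fg ((fg_span_singleton y).mul hMfg)
  have := finrank_add_finrank_inf_le (pow_succ_span_triple_mul_le hG t)
  rw [finrank_span_singleton_mul hx, finrank_span_singleton_mul hy] at this
  rwa [two_mul]

theorem finrank_span_triple_mul_le (hx : x ≠ 0) (hy : y ≠ 0) (hfg : G.FG)
    (hG : (k ∙ z) * G ≤ (k ∙ x) * G ⊔ (k ∙ y) * G ⊔ (k ∙ (z * u))) :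
    finrank k (span k {x, y, z} * G : Submodule k R) ≤ 2 * finrank k G + 1 := by
  have := finrank_pow_succ_span_triple_mul_add_finrank_inf_le hx hy hfg hG 0
  rw [zero_add, pow_one, pow_zero, one_mul] at this
  lia

theorem finrank_pow_span_triple_mul_add_le (hx : x ≠ 0) (hy : y ≠ 0) (hfg : G.FG)
    (hG : (k ∙ z) * G ≤ (k ∙ x) * G ⊔ (k ∙ y) * G ⊔ (k ∙ (z * u))) (t : ℕ) :
    finrank k (span k {x, y, z} ^ (t + 2) * G : Submodule k R) +
        finrank k (span k {x, y, z} ^ t * G : Submodule k R) ≤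
      2 * finrank k (span k {x, y, z} ^ (t + 1) * G : Submodule k R) + 1 := by
  set V := span k {x, y, z}
  have hMfg : (V ^ (t + 1) * G).FG := ((fg_span (by simp)).pow _).mul hfg
  have : FiniteDimensional k ((k ∙ x) * (V ^ (t + 1) * G) : Submodule k R) :=
    .of_fg ((fg_span_singleton x).mul hMfg)
  have hinf : (k ∙ x) * ((k ∙ y) * (V ^ t * G)) ≤
      (k ∙ x) * (V ^ (t + 1) * G) ⊓ (k ∙ y) * (V ^ (t + 1) * G) := by
    have hxV : (k ∙ x) ≤ V := span_mono (by simp)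
    have hyV : (k ∙ y) ≤ V := span_mono (by simp)
    rw [pow_succ' V, mul_assoc V]
    refine le_inf (by gcongr) ?_
    rw [mul_left_comm]
    gcongr
  have hle := finrank_mono hinf
  rw [finrank_span_singleton_mul hx, finrank_span_singleton_mul hy] at hle
  have := finrank_pow_succ_span_triple_mul_add_finrank_inf_le hx hy hfg hG (t + 1)
  lia
end

section
variable {k σ : Type*} [Field k]

theorem finrank_homogeneousSubmodule [Fintype σ] (d : ℕ) :
    finrank k (homogeneousSubmodule σ k d) = (Fintype.card σ + d - 1).choose d := by
  classical
  let sym : Sym σ d ≃ {m : σ →₀ ℕ // m.degree = d} := Sym.equivNatSum σ d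
  have : Fintype {m : σ →₀ ℕ // m.degree = d} := Fintype.ofEquiv _ sym
  have hspan : homogeneousSubmodule σ k d = span k (Set.range
      fun m : {m : σ →₀ ℕ // m.degree = d} ↦ basisMonomials σ k m) := by
    rw [homogeneousSubmodule_eq_finsupp_supported, AddMonoidAlgebra.supported_eq_span_single,
      Set.image_eq_range, coe_basisMonomials]
    rfl
  rw [hspan, finrank_span_eq_card, ← Fintype.card_congr sym, Sym.card_sym_eq_choose]
  exact (basisMonomials σ k).linearIndependent.comp _ Subtype.val_injective

attribute [local instance] MvPolynomial.gradedAlgebra in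
theorem homogeneousComponent_mul_of_isHomogeneous {R : Type*} [CommSemiring R]
    {q : MvPolynomial σ R} {e : ℕ}
    (hq : q.IsHomogeneous e) (p : MvPolynomial σ R) (d : ℕ) :
    homogeneousComponent (d + e) (p * q) = homogeneousComponent d p * q := by
  simp_rw [← decomposition.decompose'_apply]
  exact DirectSum.coe_decompose_mul_add_of_right_mem (homogeneousSubmodule σ R) hq

theorem mem_homogeneousSubmodule_mul_of_mem_ideal {R : Type*} [CommSemiring R]
    {G : Submodule R (MvPolynomial σ R)} {e d : ℕ} {p : MvPolynomial σ R}
    (hG : G ≤ homogeneousSubmodule σ R e) (hp : p.IsHomogeneous (d + e))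
    (hpG : p ∈ Ideal.span (G : Set (MvPolynomial σ R))) :
    p ∈ homogeneousSubmodule σ R d * G := by
  rw [← homogeneousComponent_eq_self hp]
  clear hp
  induction hpG using closure_induction with
  | zero => simp
  | add p q _ _ hp hq => rw [map_add]; exact add_mem hp hq
  | smul_mem r g hg =>
    rw [smul_eq_mul, homogeneousComponent_mul_of_isHomogeneous (hG hg)]
    exact mul_mem_mul (homogeneousComponent_mem d r) hg

theorem exists_homogeneousSubmodule_mul_eq [Finite σ] {R : Type*} [CommRing R]
    {G : Submodule R (MvPolynomial σ R)} {e : ℕ}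
    (hG : G ≤ homogeneousSubmodule σ R e)
    (hrad : idealOfVars σ R ≤ (Ideal.span (G : Set (MvPolynomial σ R))).radical) :
    ∃ N, ∀ d ≥ N, homogeneousSubmodule σ R d * G = homogeneousSubmodule σ R (d + e) := by
  obtain ⟨N, hN⟩ := Ideal.exists_pow_le_of_le_radical_of_fg hrad (idealOfVars_fg σ R)
  refine ⟨N, fun d hd ↦ le_antisymm ?_ fun p hp ↦ ?_⟩
  · exact (mul_le_mul_right hG _).trans (homogeneousSubmodule_mul d e)
  · refine mem_homogeneousSubmodule_mul_of_mem_ideal hG hp (hN ?_)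
    rw [mem_pow_idealOfVars_iff']
    exact fun m hm ↦ hp.coeff_eq_zero (by lia)

theorem exists_eval_ne_zero_of_le_radical {R : Type*} [CommRing R] [IsReduced R]
    {G : Submodule R (MvPolynomial σ R)} {p : σ → R} (hp : p ≠ 0)
    (hrad : idealOfVars σ R ≤ (Ideal.span (G : Set (MvPolynomial σ R))).radical) :
    ∃ u ∈ G, eval p u ≠ 0 := by
  by_contra! hvanish
  have hker : Ideal.span (G : Set (MvPolynomial σ R)) ≤ RingHom.ker (eval p) :=
    Ideal.span_le.2 hvanish
  refine hp (funext fun i ↦ ?_)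
  obtain ⟨N, hN⟩ := hrad (Ideal.subset_span ⟨i, rfl⟩ : X i ∈ idealOfVars σ R)
  exact eq_zero_of_pow_eq_zero (by simpa using hker hN : p i ^ N = 0)

theorem X_two_mul_le_of_lifting {G : Submodule k (MvPolynomial (Fin 3) k)}
    {u₀ : MvPolynomial (Fin 3) k}
    (hu₀ : eval ![0, 0, 1] u₀ ≠ 0) (hu₀G : u₀ ∈ G)
    (hlift : ∀ u ∈ G, eval ![0, 0, 1] u = 0 → X 2 * u ∈ (k ∙ X 0) * G ⊔ (k ∙ X 1) * G) :
    (k ∙ (X 2 : MvPolynomial (Fin 3) k)) * G ≤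
      (k ∙ X 0) * G ⊔ (k ∙ X 1) * G ⊔ (k ∙ (X 2 * u₀)) := by
  intro w hw
  obtain ⟨u, hu, rfl⟩ := mem_span_singleton_mul.1 hw
  set c := eval ![0, 0, 1] u / eval ![0, 0, 1] u₀
  have hvanish : eval ![0, 0, 1] (u - c • u₀) = 0 := by
    rw [map_sub, smul_eval, div_mul_cancel₀ _ hu₀, sub_self]
  have hsplit : X 2 * u = X 2 * (u - c • u₀) + c • (X 2 * u₀) := by
    rw [mul_sub, mul_smul_comm, sub_add_cancel]
  rw [hsplit]
  exact add_mem_sup (hlift _ (sub_mem hu (smul_mem _ c hu₀G)) hvanish)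
    (smul_mem _ c (mem_span_singleton_self _))

theorem finrank_lower_bounds_of_lifting {G : Submodule k (MvPolynomial (Fin 3) k)} {e : ℕ}
    (he : 0 < e) (hG : G ≤ homogeneousSubmodule (Fin 3) k e)
    (hrad : idealOfVars (Fin 3) k ≤ (Ideal.span (G : Set (MvPolynomial (Fin 3) k))).radical)
    (hlift : ∀ u ∈ G, eval ![0, 0, 1] u = 0 → X 2 * u ∈ (k ∙ X 0) * G ⊔ (k ∙ X 1) * G) :
    e + 1 < finrank k G ∧
      finrank k G + (e + 2) ≤ finrank k (homogeneousSubmodule (Fin 3) k 1 * G : Submodule k _) := by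
  obtain ⟨u₀, hu₀G, hu₀⟩ := exists_eval_ne_zero_of_le_radical (p := ![(0 : k), 0, 1])
    (fun h ↦ one_ne_zero (congrFun h 2)) hrad
  obtain ⟨N, hN⟩ := exists_homogeneousSubmodule_mul_eq hG hrad
  have hfg : G.FG := by
    have := (fg_iff_finiteDimensional _).1 (homogeneousSubmodule_fg (Fin 3) k e)
    exact (fg_iff_finiteDimensional _).2 (finiteDimensional_of_le hG)
  have hlin : homogeneousSubmodule (Fin 3) k 1 = span k {X 0, X 1, X 2} := by
    rw [homogeneousSubmodule_one_eq_span_X]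
    congr
    ext
    simp [Fin.exists_fin_succ, eq_comm]
  have hz := X_two_mul_le_of_lifting hu₀ hu₀G hlift
  have hzero := finrank_span_triple_mul_le (X_ne_zero 0) (X_ne_zero 1) hfg hz
  have hstep := finrank_pow_span_triple_mul_add_le (X_ne_zero 0) (X_ne_zero 1) hfg hz
  rw [← hlin] at hzero hstep
  have h_large : ∀ t ≥ N,
      finrank k (homogeneousSubmodule (Fin 3) k 1 ^ t * G : Submodule k _) =
        (t + e + 2).choose 2 := by
    intro t ht
    rw [homogeneousSubmodule_one_pow, hN t ht, finrank_homogeneousSubmodule, Fintype.card_fin,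
      show 3 + (t + e) - 1 = t + e + 2 by lia, Nat.choose_symm_add]
  have hle := add_le_of_hilbert hstep h_large
  have hlt := lt_of_hilbert he (by rwa [pow_one, pow_zero, one_mul]) hstep h_large
  rw [pow_zero, one_mul] at hlt hle
  rw [pow_one] at hle
  exact ⟨hlt, hle⟩
end
end

/-! ### Derivations -/

section
open scoped TensorProduct

theorem formallySmooth_mvPolynomial_of_injective {K L ι : Type*} [Field K] [CharZero K]
    [Field L] [Algebra K L] [Algebra.EssFiniteType K L] [Algebra (MvPolynomial ι K) L]
    [IsScalarTower K (MvPolynomial ι K) L]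
    (hinj : Function.Injective (algebraMap (MvPolynomial ι K) L)) :
    Algebra.FormallySmooth (MvPolynomial ι K) L := by
  have := (faithfulSMul_iff_algebraMap_injective (MvPolynomial ι K) L).2 hinj
  let Q := FractionRing (MvPolynomial ι K)
  let : Algebra Q L := FractionRing.liftAlgebra (MvPolynomial ι K) L
  have : IsScalarTower K Q L := .to₁₃₄ K (MvPolynomial ι K) Q L
  have : Algebra.EssFiniteType Q L := .of_comp K Q L
  have : CharZero Q := charZero_of_injective_algebraMap (algebraMap K Q).injective
  have : Algebra.FormallySmooth (MvPolynomial ι K) Q := .of_isLocalization (nonZeroDivisors _)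
  exact .comp (MvPolynomial ι K) Q L

theorem exists_derivation_extending {K A L : Type*} [CommRing K] [CommRing A] [Field L]
    [Algebra K A] [Algebra K L] [Algebra A L] [IsScalarTower K A L] [Algebra.FormallySmooth A L]
    (d : Derivation K A L) : ∃ D : Derivation K L L, ∀ a, D (algebraMap A L a) = d a := by
  have hker : LinearMap.ker (KaehlerDifferential.mapBaseChange K A L) = ⊥ := by
    refine (Submodule.eq_bot_iff _).2 fun x hx ↦ ?_
    obtain ⟨y, rfl⟩ := (Algebra.H1Cotangent.exact_δ_mapBaseChange K A L x).1 hx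
    rw [Subsingleton.elim y 0, map_zero]
  obtain ⟨ρ, hρ⟩ := (KaehlerDifferential.mapBaseChange K A L).exists_leftInverse_of_injective hker
  refine ⟨((d.liftKaehlerDifferential.liftBaseChange L).comp ρ).compDer
    (KaehlerDifferential.D K L), fun a ↦ ?_⟩
  have hρa : ρ (KaehlerDifferential.D K L (algebraMap A L a)) =
      1 ⊗ₜ KaehlerDifferential.D K A a := by
    simpa using DFunLike.congr_fun hρ (1 ⊗ₜ KaehlerDifferential.D K A a)
  simp [hρa]

theorem exists_derivation_apply_eq {K L ι : Type*} [Field K] [CharZero K] [Field L] [Algebra K L]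
    [Algebra.EssFiniteType K L] {y : ι → L} (hy : AlgebraicIndependent K y) (c : ι → L) :
    ∃ D : Derivation K L L, ∀ i, D (y i) = c i := by
  let : Algebra (MvPolynomial ι K) L := (aeval y).toAlgebra
  have : IsScalarTower K (MvPolynomial ι K) L :=
    .of_algebraMap_eq fun r ↦ ((aeval (R := K) y).commutes r).symm
  have := formallySmooth_mvPolynomial_of_injective hy
  obtain ⟨D, hD⟩ :=
    exists_derivation_extending (mkDerivation K c : Derivation K (MvPolynomial ι K) L)
  refine ⟨D, fun i ↦ ?_⟩
  simpa [RingHom.algebraMap_toAlgebra] using hD (X i)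

theorem derivation_aeval {K B M σ : Type*} [CommRing K] [CommRing B] [Algebra K B]
    [AddCommGroup M] [Module K M] [Module B M] [Fintype σ] (D : Derivation K B M) (x : σ → B)
    (F : MvPolynomial σ K) :
    D (aeval x F) = ∑ j, aeval x (pderiv j F) • D (x j) := by
  classical
  induction F using MvPolynomial.induction_on with
  | C r => simp
  | add p q hp hq => simp [hp, hq, add_smul, Finset.sum_add_distrib]
  | mul_X p i hp =>
    simp [hp, pderiv_X, Pi.single_apply, add_smul, Finset.sum_add_distrib, Finset.smul_sum,
      mul_smul, apply_ite (aeval x), ite_smul]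
end

/-! ### The first variation of a form along the row space of a matrix -/

section

theorem exists_mul_eq_one_of_linearIndependent_row {K ι α : Type*} [Field K] [Fintype ι]
    [Finite α] [DecidableEq α] {v : Matrix α ι K} (hv : LinearIndependent K v.row) :
    ∃ q : Matrix ι α K, v * q = 1 := by
  classical
  have := Fintype.ofFinite α
  obtain ⟨g, hg⟩ := v.vecMulLinear.exists_leftInverse_of_injective
    (LinearMap.ker_eq_bot.2 (Matrix.vecMul_injective_iff.2 hv))
  refine ⟨LinearMap.toMatrixRight' g, Matrix.toLinearMapRight'.injective ?_⟩
  rw [Matrix.toLinearMapRight'_mul, Matrix.toLinearMapRight'_one]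
  exact (congr_arg (· ∘ₗ v.vecMulLinear) (LinearMap.toMatrixRight'.symm_apply_apply g)).trans hg

variable {K L ι α : Type*} [Field K] [Field L] [Algebra K L]

theorem eq_zero_of_eval_algebraMap_eq_zero [Infinite K] {p : MvPolynomial α L}
    (h : ∀ q : α → K, eval (fun a ↦ algebraMap K L (q a)) p = 0) : p = 0 := by
  refine funext_set (fun _ ↦ Set.range (algebraMap K L))
    (fun _ ↦ Set.infinite_range_of_injective (algebraMap K L).injective) fun x hx ↦ ?_
  choose q hq using fun a ↦ hx a trivial
  rw [← funext hq, h, map_zero]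

variable [Fintype α]

/-- The `j`-th coordinate of the general point `∑ a, X a • v a` of the row space of `v`. -/
def rowForm (v : Matrix α ι L) (j : ι) : MvPolynomial α L := ∑ a, v a j • X a

/-- The restriction of the partial derivative `∂F / ∂x_j` to the row space of `v`. -/
def pderivOnRows (F : MvPolynomial ι K) (v : Matrix α ι L) (j : ι) : MvPolynomial α L :=
  aeval (rowForm v) (pderiv j F)

theorem isHomogeneous_rowForm (v : Matrix α ι L) (j : ι) : (rowForm v j).IsHomogeneous 1 := by
  refine IsHomogeneous.sum _ _ _ fun a _ ↦ ?_
  rw [smul_eq_C_mul]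
  exact (isHomogeneous_X _ a).C_mul _

theorem isHomogeneous_pderivOnRows {F : MvPolynomial ι K} {d : ℕ} (hF : F.IsHomogeneous d)
    (v : Matrix α ι L) (j : ι) : (pderivOnRows F v j).IsHomogeneous (d - 1) := by
  simpa [pderivOnRows] using (hF.pderiv (i := j)).aeval (rowForm v) (isHomogeneous_rowForm v)

theorem eval_aeval_rowForm (v : Matrix α ι L) (q : α → L) (F : MvPolynomial ι K) :
    eval q (aeval (rowForm v) F) = aeval (fun j ↦ ∑ a, v a j * q a) F := by
  have hcomp : ((aeval (R := L) q).restrictScalars K).comp (aeval (R := K) (rowForm v)) =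
      aeval (fun j ↦ ∑ a, v a j * q a) := by
    ext j
    simp [rowForm]
  simpa [aeval_eq_eval] using DFunLike.congr_fun hcomp F

section
variable {F : MvPolynomial ι K} {v : Matrix α ι L}

theorem X_mem_span_rowForm [Finite ι] (hv : LinearIndependent L v.row) (a : α) :
    (X a : MvPolynomial α L) ∈ Submodule.span L (Set.range (rowForm v)) := by
  classical
  have := Fintype.ofFinite ι
  obtain ⟨q, hq⟩ := exists_mul_eq_one_of_linearIndependent_row hv
  have hX : ∑ j, q j a • rowForm v j = X a := by
    have hcoeff (b : α) : ∑ j, q j a * v b j = if b = a then 1 else 0 := by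
      simpa [Matrix.mul_apply, Matrix.one_apply, mul_comm] using congr_fun₂ hq b a
    simp only [rowForm, Finset.smul_sum, smul_smul]
    rw [Finset.sum_comm]
    simp only [← Finset.sum_smul, hcoeff, ite_smul, one_smul, zero_smul, Finset.sum_ite_eq',
      Finset.mem_univ, if_true]
  exact hX ▸ sum_mem fun j _ ↦ Submodule.smul_mem _ _ (Submodule.subset_span ⟨j, rfl⟩)

theorem idealOfVars_le_radical_span_pderivOnRows [Finite ι] [IsAlgClosed K]
    (hns : ∀ z : ι → K, (∀ i, eval z (pderiv i F) = 0) → z = 0)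
    (hv : LinearIndependent L v.row) :
    idealOfVars α L ≤ (Ideal.span (Set.range (pderivOnRows F v))).radical := by
  have hX (j : ι) : (X j : MvPolynomial ι K) ∈
      (Ideal.span (Set.range fun i ↦ pderiv i F)).radical := by
    rw [← vanishingIdeal_zeroLocus_eq_radical (K := K), zeroLocus_span, mem_vanishingIdeal_iff]
    intro z hz
    have hz0 := hns z fun i ↦ by simpa [aeval_eq_eval] using hz _ ⟨i, rfl⟩
    simp [hz0]
  have hrow (j : ι) : rowForm v j ∈ (Ideal.span (Set.range (pderivOnRows F v))).radical := by
    obtain ⟨N, hN⟩ := hX j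
    have := Ideal.mem_map_of_mem (aeval (R := K) (rowForm v)) hN
    rw [Ideal.map_span, ← Set.range_comp, map_pow, aeval_X] at this
    exact ⟨N, this⟩
  have hspan : Submodule.span L (Set.range (rowForm v)) ≤
      (Ideal.span (Set.range (pderivOnRows F v))).radical.restrictScalars L :=
    Submodule.span_le.2 (Set.range_subset_iff.2 hrow)
  rw [idealOfVars, Ideal.span_le, Set.range_subset_iff]
  exact fun a ↦ hspan (X_mem_span_rowForm hv a)
end

variable [Fintype ι]

/-- The first order variation of the restriction of `F` to the row space of `v`, when `v` moves in
the direction `w`. -/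
def firstVariation (F : MvPolynomial ι K) (v : Matrix α ι L) :
    Matrix α ι L →ₗ[L] MvPolynomial α L :=
  ∑ a, LinearMap.mulLeft L (X a) ∘ₗ Fintype.linearCombination L (pderivOnRows F v) ∘ₗ
    LinearMap.proj a

theorem firstVariation_apply (F : MvPolynomial ι K) (v w : Matrix α ι L) :
    firstVariation F v w = ∑ a, X a * ∑ j, w a j • pderivOnRows F v j := by
  simp only [firstVariation, LinearMap.sum_apply]
  rfl

theorem range_firstVariation (F : MvPolynomial ι K) (v : Matrix α ι L) :
    LinearMap.range (firstVariation F v) =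
      homogeneousSubmodule α L 1 * Submodule.span L (Set.range (pderivOnRows F v)) := by
  classical
  rw [homogeneousSubmodule_one_eq_span_X]
  apply le_antisymm
  · rintro _ ⟨w, rfl⟩
    rw [firstVariation_apply]
    exact sum_mem fun a _ ↦ Submodule.mul_mem_mul (Submodule.subset_span ⟨a, rfl⟩)
      (sum_mem fun j _ ↦ Submodule.smul_mem _ _ (Submodule.subset_span ⟨j, rfl⟩))
  · rw [Submodule.span_mul_span, Submodule.span_le]
    rintro _ ⟨_, ⟨a, rfl⟩, _, ⟨j, rfl⟩, rfl⟩
    refine ⟨Matrix.single a j 1, ?_⟩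
    rw [firstVariation_apply, Finset.sum_eq_single_of_mem a (Finset.mem_univ _)
      fun b _ hb ↦ by simp [Matrix.single_apply_of_row_ne hb.symm]]
    simp [Matrix.single_apply, ite_smul]

theorem finrank_add_finrank_ker_firstVariation (F : MvPolynomial ι K) (v : Matrix α ι L) :
    Module.finrank L (homogeneousSubmodule α L 1 *
        Submodule.span L (Set.range (pderivOnRows F v)) : Submodule L _) +
      Module.finrank L (LinearMap.ker (firstVariation F v)) =
    Fintype.card α * Fintype.card ι := by
  rw [← range_firstVariation, LinearMap.finrank_range_add_finrank_ker, Module.finrank_matrix,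
    Module.finrank_self, mul_one]

variable {F : MvPolynomial ι K} {v : Matrix α ι L}

theorem firstVariation_map_derivation [Infinite K] (hFv : aeval (rowForm v) F = 0)
    (D : Derivation K L L) : firstVariation F v (v.map D) = 0 := by
  refine eq_zero_of_eval_algebraMap_eq_zero (K := K) fun q ↦ ?_
  set x : ι → L := fun j ↦ ∑ a, v a j * algebraMap K L (q a)
  have hx : aeval x F = 0 := by rw [← eval_aeval_rowForm, hFv, map_zero]
  have hDx (j : ι) : D (x j) = ∑ a, algebraMap K L (q a) * D (v a j) := by simp [x]
  calc eval (fun a ↦ algebraMap K L (q a)) (firstVariation F v (v.map D))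
      = ∑ a, algebraMap K L (q a) * ∑ j, D (v a j) * aeval x (pderiv j F) := by
        simp only [firstVariation_apply, map_sum, map_mul, eval_X, smul_eval, pderivOnRows,
          eval_aeval_rowForm, Matrix.map_apply, x]
    _ = ∑ j, aeval x (pderiv j F) * D (x j) := by
        simp_rw [hDx, Finset.mul_sum]
        rw [Finset.sum_comm]
        exact Finset.sum_congr rfl fun _ _ ↦ Finset.sum_congr rfl fun _ _ ↦ by ring
    _ = D (aeval x F) := (derivation_aeval D x F).symm
    _ = 0 := by rw [hx, map_zero]

theorem sum_smul_pderivOnRows_eq_zero (hFv : aeval (rowForm v) F = 0) (a : α) :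
    ∑ j, v a j • pderivOnRows F v j = 0 := by
  classical
  have hpderiv (j : ι) : pderiv a (rowForm v j) = C (v a j) := by
    simp [rowForm, pderiv_X, Pi.single_apply, smul_eq_C_mul]
  have h := derivation_aeval ((pderiv (R := L) a).restrictScalars K) (rowForm v) F
  simp only [hFv, map_zero, Derivation.restrictScalars_apply, hpderiv] at h
  rw [h]
  exact Finset.sum_congr rfl fun j _ ↦ by rw [smul_eq_C_mul, smul_eq_mul, mul_comm, pderivOnRows]

theorem card_add_finrank_span_pderivOnRows_le (hFv : aeval (rowForm v) F = 0)
    (hv : LinearIndependent L v.row) :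
    Fintype.card α + Module.finrank L (Submodule.span L (Set.range (pderivOnRows F v))) ≤
      Fintype.card ι := by
  let t := Fintype.linearCombination L (pderivOnRows F v)
  let rows : α → LinearMap.ker t := fun a ↦ ⟨v a, sum_smul_pderivOnRows_eq_zero hFv a⟩
  have hrows : LinearIndependent L rows := .of_comp (LinearMap.ker t).subtype hv
  have hrank := LinearMap.finrank_range_add_finrank_ker t
  rw [Fintype.range_linearCombination, Module.finrank_fintype_fun_eq_card] at hrank
  linarith [hrows.fintype_card_le_finrank]

theorem essFiniteType_of_adjoin_range_eq_top {K L σ : Type*} [Field K] [Field L] [Algebra K L]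
    [Finite σ] {x : σ → L} (hx : IntermediateField.adjoin K (Set.range x) = ⊤) :
    Algebra.EssFiniteType K L :=
  IntermediateField.fg_top_iff.1
    (hx ▸ IntermediateField.fg_adjoin_of_finite (Set.finite_range x))

theorem derivation_eq_zero_of_adjoin_eq_top {K L M : Type*} [Field K] [Field L] [Algebra K L]
    [AddCommGroup M] [Module K M] [Module L M]
    {s : Set L} (hs : IntermediateField.adjoin K s = ⊤) {D : Derivation K L M}
    (hD : ∀ x ∈ s, D x = 0) : D = 0 := by
  ext x
  have hx : x ∈ IntermediateField.adjoin K s := hs ▸ IntermediateField.mem_top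
  induction hx using IntermediateField.adjoin_induction with
  | mem x hx => exact hD x hx
  | algebraMap r => exact D.map_algebraMap r
  | add x y _ _ hx hy => simp_all
  | inv x _ hx => simp_all [Derivation.leibniz_inv]
  | mul x y _ _ hx hy => simp_all

theorem trdeg_le_finrank_ker_firstVariation [CharZero K] (hFv : aeval (rowForm v) F = 0)
    (hgen : IntermediateField.adjoin K (Set.range fun p : α × ι ↦ v p.1 p.2) = ⊤) :
    Algebra.trdeg K L ≤ Module.finrank L (LinearMap.ker (firstVariation F v)) := by
  classical
  have := essFiniteType_of_adjoin_range_eq_top hgen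
  obtain ⟨s, hs⟩ := exists_isTranscendenceBasis K L
  choose D hD using fun i : s ↦ exists_derivation_apply_eq hs.1 (Pi.single i 1)
  let evalBasis : Derivation K L L →ₗ[L] s → L :=
    { toFun := fun E i ↦ E i, map_add' := fun _ _ ↦ rfl, map_smul' := fun _ _ ↦ rfl }
  have hDind : LinearIndependent L D := by
    refine .of_comp evalBasis ?_
    rw [show evalBasis ∘ D = fun i ↦ Pi.single i 1 from funext fun i ↦ funext (hD i)]
    exact Pi.linearIndependent_single_one s L
  let vary : Derivation K L L →ₗ[L] LinearMap.ker (firstVariation F v) :=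
    { toFun := fun E ↦ ⟨v.map E, firstVariation_map_derivation hFv E⟩
      map_add' := fun _ _ ↦ rfl
      map_smul' := fun _ _ ↦ rfl }
  have hvary : LinearMap.ker vary = ⊥ := by
    refine (Submodule.eq_bot_iff _).2 fun E hE ↦ derivation_eq_zero_of_adjoin_eq_top hgen ?_
    rintro _ ⟨p, rfl⟩
    exact congr_fun₂ (congr_arg Subtype.val hE) p.1 p.2
  rw [← hs.cardinalMk_eq_trdeg]
  exact (hDind.map' vary hvary).cardinalMk_le_finrank
end

section
variable {K L ι : Type*} [Field K] [CharZero K] [Field L] [Algebra K L]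
  {F : MvPolynomial ι K} {v : Matrix (Fin 3) ι L}

theorem sum_derivation_mul_eval_pderivOnRows [Fintype ι] (hFv : aeval (rowForm v) F = 0)
    (D : Derivation K L L) : ∑ j, D (v 2 j) * eval ![0, 0, 1] (pderivOnRows F v j) = 0 := by
  have h := congr_arg (eval ![0, 0, 1]) (firstVariation_map_derivation hFv D)
  simpa [firstVariation_apply, Fin.sum_univ_three, smul_eval] using h

variable [Algebra.EssFiniteType K L] [Finite ι]

theorem eval_pderivOnRows_ne_zero_of_algebraicIndependent {i : ι}
    (hFv : aeval (rowForm v) F = 0)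
    (hi : AlgebraicIndependent K fun j : {j // j ≠ i} ↦ v 2 j)
    (hrad : idealOfVars (Fin 3) L ≤
      (Ideal.span (Submodule.span L (Set.range (pderivOnRows F v)) : Set _)).radical) :
    eval ![0, 0, 1] (pderivOnRows F v i) ≠ 0 := by
  classical
  have := Fintype.ofFinite ι
  intro hgi
  obtain ⟨u, hu, hup⟩ := exists_eval_ne_zero_of_le_radical (p := (![0, 0, 1] : Fin 3 → L))
    (fun h ↦ one_ne_zero (congr_fun h 2)) hrad
  obtain ⟨c, rfl⟩ := (Submodule.mem_span_range_iff_exists_fun L).1 hu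
  obtain ⟨D, hD⟩ := exists_derivation_apply_eq hi fun j ↦ c j
  refine hup ((map_sum _ _ _).trans
    (Eq.trans ?_ (sum_derivation_mul_eval_pderivOnRows hFv D)))
  refine Finset.sum_congr rfl fun j _ ↦ ?_
  rw [smul_eval]
  by_cases hj : j = i
  · rw [hj, hgi, mul_zero, mul_zero]
  · rw [hD ⟨j, hj⟩]

theorem X_two_mul_mem_of_eval_eq_zero {i : ι}
    (hFv : aeval (rowForm v) F = 0)
    (hi : AlgebraicIndependent K fun j : {j // j ≠ i} ↦ v 2 j)
    (hgi : eval ![0, 0, 1] (pderivOnRows F v i) ≠ 0)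
    {u : MvPolynomial (Fin 3) L} (hu : u ∈ Submodule.span L (Set.range (pderivOnRows F v)))
    (hup : eval ![0, 0, 1] u = 0) :
    X 2 * u ∈ (L ∙ X 0) * Submodule.span L (Set.range (pderivOnRows F v)) ⊔
      (L ∙ X 1) * Submodule.span L (Set.range (pderivOnRows F v)) := by
  classical
  have := Fintype.ofFinite ι
  obtain ⟨c, rfl⟩ := (Submodule.mem_span_range_iff_exists_fun L).1 hu
  obtain ⟨D, hD⟩ := exists_derivation_apply_eq hi fun j ↦ c j
  have hDi : D (v 2 i) = c i := by
    have hdiff : ∑ j, (D (v 2 j) - c j) * eval ![0, 0, 1] (pderivOnRows F v j) = 0 := by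
      simp only [sub_mul, Finset.sum_sub_distrib, sum_derivation_mul_eval_pderivOnRows hFv D]
      simpa [smul_eval] using hup
    rw [Finset.sum_eq_single_of_mem i (Finset.mem_univ _)
      fun j _ hj ↦ by rw [hD ⟨j, hj⟩, sub_self, zero_mul]] at hdiff
    exact sub_eq_zero.1 ((mul_eq_zero.1 hdiff).resolve_right hgi)
  have hDc (j : ι) : D (v 2 j) = c j := by
    by_cases hj : j = i
    · rw [hj, hDi]
    · exact hD ⟨j, hj⟩
  -- The `X 2` term of the first variation along `D` is `X 2 * u`.
  have hvar := firstVariation_map_derivation hFv D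
  simp only [firstVariation_apply, Matrix.map_apply, Fin.sum_univ_three, hDc] at hvar
  have hmem (w : ι → L) : -∑ j, w j • pderivOnRows F v j ∈
      Submodule.span L (Set.range (pderivOnRows F v)) :=
    neg_mem (sum_mem fun j _ ↦ Submodule.smul_mem _ _ (Submodule.subset_span ⟨j, rfl⟩))
  have hX2 : X 2 * ∑ j, c j • pderivOnRows F v j =
      X 0 * -∑ j, D (v 0 j) • pderivOnRows F v j +
        X 1 * -∑ j, D (v 1 j) • pderivOnRows F v j := by
    linear_combination hvar
  rw [hX2]
  exact Submodule.add_mem_sup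
    (Submodule.mul_mem_mul (Submodule.mem_span_singleton_self _) (hmem _))
    (Submodule.mul_mem_mul (Submodule.mem_span_singleton_self _) (hmem _))
end

theorem trdeg_add_le_of_algebraicIndependent {K L ι : Type*} [Field K] [CharZero K] [IsAlgClosed K]
    [Field L] [Algebra K L] [Fintype ι] {d : ℕ} (hd : 2 ≤ d) {F : MvPolynomial ι K}
    (hF : F.IsHomogeneous d)
    (hns : ∀ z : ι → K, (∀ i, eval z (pderiv i F) = 0) → z = 0)
    {v : Matrix (Fin 3) ι L} (hFv : aeval (rowForm v) F = 0)
    (hv : LinearIndependent L v.row)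
    (hgen : IntermediateField.adjoin K (Set.range fun p : Fin 3 × ι ↦ v p.1 p.2) = ⊤) {i : ι}
    (hi : AlgebraicIndependent K fun j : {j // j ≠ i} ↦ v 2 j) :
    d + 4 ≤ Fintype.card ι ∧
      Algebra.trdeg K L + ((2 * (d + 1) : ℕ) : Cardinal) ≤
        ((3 * Fintype.card ι : ℕ) : Cardinal) := by
  have := essFiniteType_of_adjoin_range_eq_top hgen
  have hrad := (idealOfVars_le_radical_span_pderivOnRows hns hv).trans
    (Ideal.radical_mono (Ideal.span_mono (Submodule.subset_span (R := L))))
  have hgi := eval_pderivOnRows_ne_zero_of_algebraicIndependent hFv hi hrad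
  have hGhom : Submodule.span L (Set.range (pderivOnRows F v)) ≤
      homogeneousSubmodule (Fin 3) L (d - 1) :=
    Submodule.span_le.2 (Set.range_subset_iff.2 (isHomogeneous_pderivOnRows hF v))
  obtain ⟨hG, hmul⟩ := finrank_lower_bounds_of_lifting (by lia : 0 < d - 1) hGhom hrad
    fun u hu hup ↦ X_two_mul_mem_of_eval_eq_zero hFv hi hgi hu hup
  have hcard := card_add_finrank_span_pderivOnRows_le hFv hv
  have hker := finrank_add_finrank_ker_firstVariation F v
  rw [Fintype.card_fin] at hcard hker
  refine ⟨by lia, ?_⟩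
  calc Algebra.trdeg K L + ((2 * (d + 1) : ℕ) : Cardinal)
      ≤ (Module.finrank L (LinearMap.ker (firstVariation F v)) : Cardinal) +
          ((2 * (d + 1) : ℕ) : Cardinal) := by
        gcongr
        exact trdeg_le_finrank_ker_firstVariation hFv hgen
    _ ≤ ((3 * Fintype.card ι : ℕ) : Cardinal) := by
        norm_cast
        lia

/-! ### Transcendence degrees and generic zeros -/

section
open Cardinal

universe u

theorem trdeg_add_one_le_of_surjective_of_not_injective {K : Type*} {A B : Type u} [Field K]
    [CommRing A] [IsDomain A] [Algebra K A] [CommRing B] [IsDomain B] [Algebra K B]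
    {f : A →ₐ[K] B} (hf : Function.Surjective f) (hinj : ¬ Function.Injective f) :
    Algebra.trdeg K B + 1 ≤ Algebra.trdeg K A := by
  obtain ⟨s, hs⟩ := exists_isTranscendenceBasis K B
  choose y hy using fun b : s ↦ hf b
  have hfy : f ∘ y = Subtype.val := funext hy
  have hyind : AlgebraicIndependent K y := .of_comp f (hfy ▸ hs.1)
  obtain ⟨a, hfa, ha⟩ : ∃ a, f a = 0 ∧ a ≠ 0 := by
    simpa [injective_iff_map_eq_zero] using hinj
  have hatrans : Transcendental (Algebra.adjoin K (Set.range y)) a := by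
    intro halg
    obtain ⟨⟨r, hr⟩, hr0, hdvd⟩ := halg.exists_nonzero_dvd (mem_nonZeroDivisors_of_ne_zero ha)
    rw [Algebra.adjoin_range_eq_range_aeval] at hr
    obtain ⟨p, rfl⟩ := hr
    have hfr : aeval (Subtype.val : s → B) p = 0 := by
      rw [← hfy]
      exact (comp_aeval_apply y f p).symm.trans (zero_dvd_iff.1 (hfa ▸ map_dvd f hdvd))
    have hp := hs.1.eq_zero_of_aeval_eq_zero p hfr
    exact hr0 (Subtype.ext (by simp [hp]))
  rw [← hs.cardinalMk_eq_trdeg, ← mk_option]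
  exact (AlgebraicIndependent.option_iff.2 ⟨hyind, hatrans⟩).cardinalMk_le_trdeg

theorem trdeg_quotient_le_of_le {K : Type*} {A : Type u} [Field K] [CommRing A] [Algebra K A]
    {I J : Ideal A} (h : I ≤ J) : Algebra.trdeg K (A ⧸ J) ≤ Algebra.trdeg K (A ⧸ I) :=
  trdeg_le_of_surjective (Ideal.Quotient.factorₐ K h) (Ideal.Quotient.factor_surjective h)

theorem trdeg_quotient_add_one_le_of_lt {K : Type*} {A : Type u} [Field K] [CommRing A]
    [Algebra K A] {P Q : Ideal A} [P.IsPrime] [Q.IsPrime] (h : P < Q) :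
    Algebra.trdeg K (A ⧸ Q) + 1 ≤ Algebra.trdeg K (A ⧸ P) := by
  refine trdeg_add_one_le_of_surjective_of_not_injective (f := Ideal.Quotient.factorₐ K h.le)
    (Ideal.Quotient.factor_surjective h.le) fun hinj ↦ ?_
  obtain ⟨a, haQ, haP⟩ := SetLike.exists_of_lt h
  refine haP (Ideal.Quotient.eq_zero_iff_mem.1 (hinj ?_))
  rw [map_zero]
  exact Ideal.Quotient.eq_zero_iff_mem.2 haQ
end

section
variable {K σ : Type*} [Field K] (P : Ideal (MvPolynomial σ K))

/-- The generic zero of the prime ideal `P`: the coordinate functions, seen in its function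
field. -/
def genericZero (i : σ) : FractionRing (MvPolynomial σ K ⧸ P) :=
  algebraMap (MvPolynomial σ K ⧸ P) _ (Ideal.Quotient.mk P (X i))

theorem aeval_genericZero (f : MvPolynomial σ K) :
    aeval (genericZero P) f = algebraMap (MvPolynomial σ K ⧸ P) _ (Ideal.Quotient.mk P f) := by
  have hcomp : aeval (genericZero P) = (IsScalarTower.toAlgHom K (MvPolynomial σ K ⧸ P)
      (FractionRing (MvPolynomial σ K ⧸ P))).comp (Ideal.Quotient.mkₐ K P) := by
    ext i
    simp [genericZero]
  rw [hcomp]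
  rfl

theorem aeval_genericZero_eq_zero_iff {f : MvPolynomial σ K} :
    aeval (genericZero P) f = 0 ↔ f ∈ P := by
  rw [aeval_genericZero, map_eq_zero_iff _ (IsFractionRing.injective _ _),
    Ideal.Quotient.eq_zero_iff_mem]

variable [P.IsPrime]

theorem adjoin_range_genericZero :
    IntermediateField.adjoin K (Set.range (genericZero P)) = ⊤ := by
  have hmem (b : MvPolynomial σ K ⧸ P) : algebraMap _ (FractionRing (MvPolynomial σ K ⧸ P)) b ∈
      IntermediateField.adjoin K (Set.range (genericZero P)) := by
    obtain ⟨f, rfl⟩ := Ideal.Quotient.mk_surjective b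
    rw [← aeval_genericZero]
    refine IntermediateField.algebra_adjoin_le_adjoin _ _ ?_
    rw [Algebra.adjoin_range_eq_range_aeval]
    exact ⟨f, rfl⟩
  refine eq_top_iff.2 fun z _ ↦ ?_
  obtain ⟨a, b, -, rfl⟩ := IsFractionRing.div_surjective (A := MvPolynomial σ K ⧸ P) z
  exact div_mem (hmem a) (hmem b)
end

/-! ### Ideals of families of subspaces -/

section
variable {K L α ι : Type*} [Field K]

/-- The value of a polynomial in the entries of an `α × ι` matrix at the matrix `v`. -/
abbrev evalMatrix [CommRing L] [Algebra K L] (v : Matrix α ι L) :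
    MvPolynomial (α × ι) K →ₐ[K] L :=
  aeval fun p ↦ v p.1 p.2

/-- The function `v ↦ det (v * q)` for a constant matrix `q`. As `q` varies these replace the
maximal minors of `v`. -/
def mulDet [Fintype α] [DecidableEq α] [Fintype ι] (q : Matrix ι α K) : MvPolynomial (α × ι) K :=
  Matrix.det (Matrix.mvPolynomialX α ι K *
    (q.map C : Matrix ι α (MvPolynomial (α × ι) K)) : Matrix α α (MvPolynomial (α × ι) K))

theorem evalMatrix_mulDet [CommRing L] [Algebra K L] [Fintype α] [DecidableEq α] [Fintype ι]
    (v : Matrix α ι L) (q : Matrix ι α K) :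
    evalMatrix v (mulDet q) = (v * q.map (algebraMap K L)).det := by
  rw [mulDet, AlgHom.map_det]
  congr 1
  ext a b
  simp [Matrix.mul_apply]

/-- Pullback of functions along left multiplication `v ↦ M * v`. -/
def leftMulPullback [Fintype α] (M : Matrix α α K) :
    MvPolynomial (α × ι) K →ₐ[K] MvPolynomial (α × ι) K :=
  bind₁ fun p ↦ ∑ b, C (M p.1 b) * X (b, p.2)

theorem evalMatrix_leftMulPullback [Fintype α] (M : Matrix α α K) (v : Matrix α ι K)
    (f : MvPolynomial (α × ι) K) : evalMatrix v (leftMulPullback M f) = evalMatrix (M * v) f := by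
  simp [leftMulPullback, aeval_bind₁, Matrix.mul_apply]

/-- Pullback of functions along the orbit map `M ↦ M * v`. -/
def orbitPullback [Fintype α] (v : Matrix α ι K) :
    MvPolynomial (α × ι) K →ₐ[K] MvPolynomial (α × α) K :=
  bind₁ fun p ↦ ∑ b, X (p.1, b) * C (v b p.2)

theorem evalMatrix_orbitPullback [Fintype α] (v : Matrix α ι K) (M : Matrix α α K)
    (f : MvPolynomial (α × ι) K) : evalMatrix M (orbitPullback v f) = evalMatrix (M * v) f := by
  simp [orbitPullback, aeval_bind₁, Matrix.mul_apply]

theorem linearIndependent_row_of_det_mul_ne_zero [Fintype α] [DecidableEq α] [Fintype ι]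
    {v : Matrix α ι K} {q : Matrix ι α K} (h : (v * q).det ≠ 0) : LinearIndependent K v.row := by
  rw [← Matrix.vecMul_injective_iff]
  have hinj : Function.Injective (v * q).vecMul :=
    Matrix.vecMul_injective_iff_isUnit.2 ((Matrix.isUnit_iff_isUnit_det _).2 h.isUnit)
  intro x y hxy
  apply hinj
  simp only [← Matrix.vecMul_vecMul, show Matrix.vecMul x v = Matrix.vecMul y v from hxy]

theorem orbitPullback_surjective [Fintype α] [Finite ι] {u : Matrix α ι K}
    (hu : LinearIndependent K u.row) : Function.Surjective (orbitPullback u) := by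
  classical
  have := Fintype.ofFinite ι
  obtain ⟨q, hq⟩ := exists_mul_eq_one_of_linearIndependent_row hu
  have hX (a c : α) : orbitPullback u (∑ j, X (a, j) * C (q j c)) = X (a, c) := by
    calc orbitPullback u (∑ j, X (a, j) * C (q j c))
        = ∑ b, X (a, b) * C ((u * q) b c) := by
          simp only [orbitPullback, map_sum, map_mul, bind₁_X_right, bind₁_C_right,
            Matrix.mul_apply, Finset.sum_mul, Finset.mul_sum, mul_assoc]
          exact Finset.sum_comm
      _ = X (a, c) := by simp [hq, Matrix.one_apply]
  rw [← AlgHom.range_eq_top, eq_top_iff, ← adjoin_range_X, Algebra.adjoin_le_iff]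
  rintro _ ⟨⟨a, c⟩, rfl⟩
  exact ⟨_, hX a c⟩

theorem exists_span_row_eq [Finite ι] [Fintype α] {Λ : Submodule K (ι → K)}
    (h : Module.finrank K Λ = Fintype.card α) :
    ∃ u : Matrix α ι K, LinearIndependent K u.row ∧ Submodule.span K (Set.range u.row) = Λ := by
  let b := (Module.finBasisOfFinrankEq K Λ h).reindex (Fintype.equivFin α).symm
  refine ⟨fun a ↦ b a, ?_, ?_⟩
  · exact b.linearIndependent.map' Λ.subtype Λ.ker_subtype
  · rw [show (Set.range (Matrix.row fun a ↦ (b a : ι → K))) = Λ.subtype '' Set.range b by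
      rw [← Set.range_comp]; rfl, Submodule.span_image, b.span_eq, Submodule.map_subtype_top]

theorem forall_mem_span_row_iff [Fintype α] {u v : Matrix α ι K} :
    (∀ a, v a ∈ Submodule.span K (Set.range u.row)) ↔ ∃ M : Matrix α α K, M * u = v := by
  simp only [Submodule.mem_span_range_iff_exists_fun]
  rw [Classical.skolem]
  refine exists_congr fun M ↦ Iff.trans ?_ Matrix.ext_iff
  simp only [funext_iff, Finset.sum_apply, Pi.smul_apply, smul_eq_mul]
  rfl

/-- The polynomials vanishing on every matrix whose rows lie in `Λ`. -/
def rowIdeal (α : Type*) (Λ : Submodule K (ι → K)) : Ideal (MvPolynomial (α × ι) K) :=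
  vanishingIdeal K {w | ∀ a, (fun j ↦ w (a, j)) ∈ Λ}

theorem mem_rowIdeal {Λ : Submodule K (ι → K)} {f : MvPolynomial (α × ι) K} :
    f ∈ rowIdeal α Λ ↔ ∀ v : Matrix α ι K, (∀ a, v a ∈ Λ) → evalMatrix v f = 0 :=
  mem_vanishingIdeal_iff.trans
    ⟨fun h v hv ↦ h (fun p ↦ v p.1 p.2) hv, fun h w hw ↦ h (fun a j ↦ w (a, j)) hw⟩

theorem mem_rowIdeal_span_row [Fintype α] {u : Matrix α ι K} {f : MvPolynomial (α × ι) K} :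
    f ∈ rowIdeal α (Submodule.span K (Set.range u.row)) ↔
      ∀ M : Matrix α α K, evalMatrix (M * u) f = 0 := by
  simp only [mem_rowIdeal, forall_mem_span_row_iff, forall_exists_index, forall_apply_eq_imp_iff]

theorem rowIdeal_span_row [Infinite K] [Fintype α] (u : Matrix α ι K) :
    rowIdeal α (Submodule.span K (Set.range u.row)) = RingHom.ker (orbitPullback u) := by
  ext f
  simp only [mem_rowIdeal_span_row, ← evalMatrix_orbitPullback, RingHom.mem_ker]
  refine ⟨fun h ↦ MvPolynomial.funext fun x ↦ ?_, fun h M ↦ by rw [h, map_zero]⟩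
  rw [map_zero]
  exact h fun a b ↦ x (a, b)

theorem isPrime_rowIdeal [Infinite K] [Finite ι] [Fintype α] {Λ : Submodule K (ι → K)}
    (h : Module.finrank K Λ = Fintype.card α) : (rowIdeal α Λ).IsPrime := by
  obtain ⟨u, -, rfl⟩ := exists_span_row_eq h
  rw [rowIdeal_span_row]
  exact RingHom.ker_isPrime _

/-- The polynomials vanishing on every matrix whose rows all lie in one member of the family `Z`
of subspaces. -/
def familyIdeal (α : Type*) (Z : Set (Submodule K (ι → K))) : Ideal (MvPolynomial (α × ι) K) :=
  ⨅ Λ ∈ Z, rowIdeal α Λ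

theorem mem_familyIdeal {Z : Set (Submodule K (ι → K))} {f : MvPolynomial (α × ι) K} :
    f ∈ familyIdeal α Z ↔ ∀ Λ ∈ Z, f ∈ rowIdeal α Λ := by
  simp [familyIdeal]

theorem familyIdeal_anti {Z Z' : Set (Submodule K (ι → K))} (h : Z ⊆ Z') :
    familyIdeal α Z' ≤ familyIdeal α Z :=
  biInf_mono h
end

section
universe u

variable {K α ι : Type u} [Field K] [Infinite K] [Fintype α] [Finite ι]

theorem card_sq_le_trdeg_quotient_familyIdeal {Z : Set (Submodule K (ι → K))}
    {Λ : Submodule K (ι → K)} (hΛ : Λ ∈ Z) (h : Module.finrank K Λ = Fintype.card α) :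
    ((Fintype.card α ^ 2 : ℕ) : Cardinal) ≤
      Algebra.trdeg K (MvPolynomial (α × ι) K ⧸ familyIdeal α Z) := by
  obtain ⟨u, hu, rfl⟩ := exists_span_row_eq h
  have hker : ∀ f ∈ familyIdeal α Z, orbitPullback u f = 0 := fun f hf ↦ by
    rw [← RingHom.mem_ker, ← rowIdeal_span_row]
    exact mem_familyIdeal.1 hf _ hΛ
  have := trdeg_le_of_surjective (Ideal.Quotient.liftₐ _ (orbitPullback u) hker)
    (Ideal.Quotient.lift_surjective_of_surjective _ hker (orbitPullback_surjective hu))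
  simpa [MvPolynomial.trdeg_of_isDomain, sq] using this
end

section
variable {m n : ℕ} {Z Z' : Set (Submodule KK (Fin (n + 1) → KK))}

theorem grClosed_iff : GrClosed m n Z ↔ (∀ Λ ∈ Z, Module.finrank KK Λ = m + 1) ∧
    ∃ S : Set (MvPolynomial (Fin (m + 1) × Fin (n + 1)) KK),
      ∀ v : Matrix (Fin (m + 1)) (Fin (n + 1)) KK,
        (LinearIndependent KK v.row → Submodule.span KK (Set.range v.row) ∈ Z) ↔
          ∀ g ∈ S, evalMatrix v g = 0 :=
  and_congr_right fun _ ↦ exists_congr fun _ ↦ Set.ext_iff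

theorem GrClosed.sep_mem_rowIdeal (hZ : GrClosed m n Z)
    (f : MvPolynomial (Fin (m + 1) × Fin (n + 1)) KK) :
    GrClosed m n {Λ ∈ Z | f ∈ rowIdeal (Fin (m + 1)) Λ} := by
  -- All `mulDet q` vanish on dependent tuples, so the products constrain only independent ones.
  obtain ⟨hdim, S, hS⟩ := grClosed_iff.1 hZ
  refine grClosed_iff.2 ⟨fun Λ hΛ ↦ hdim Λ hΛ.1,
    S ∪ Set.range fun qM : Matrix _ _ KK × Matrix _ _ KK ↦
      mulDet qM.1 * leftMulPullback qM.2 f, fun v ↦ ?_⟩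
  simp only [Set.mem_union, or_imp, forall_and, ← hS, Set.forall_mem_range, Prod.forall, map_mul,
    mul_eq_zero, evalMatrix_mulDet, evalMatrix_leftMulPullback, Set.mem_sep_iff,
    mem_rowIdeal_span_row]
  refine and_congr_right fun _ ↦ ⟨fun h q M ↦ ?_, fun h hv M ↦ ?_⟩
  · exact or_iff_not_imp_left.2 fun hdet ↦ h (linearIndependent_row_of_det_mul_ne_zero hdet) M
  · obtain ⟨q, hq⟩ := exists_mul_eq_one_of_linearIndependent_row hv
    exact (h q M).resolve_left (by simp [Algebra.algebraMap_self, hq])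

theorem isPrime_familyIdeal (hZ : GrVariety m n Z) :
    (familyIdeal (Fin (m + 1)) Z).IsPrime := by
  obtain ⟨hclosed, ⟨Λ₀, hΛ₀⟩, hirred⟩ := hZ
  have hprime {Λ} (hΛ : Λ ∈ Z) : (rowIdeal (Fin (m + 1)) Λ).IsPrime :=
    isPrime_rowIdeal (by rw [hclosed.1 Λ hΛ, Fintype.card_fin])
  refine ⟨fun htop ↦ (hprime hΛ₀).ne_top (top_le_iff.1 (htop ▸ biInf_le _ hΛ₀)),
    fun {f g} hfg ↦ ?_⟩
  refine (hirred _ _ (hclosed.sep_mem_rowIdeal f) (hclosed.sep_mem_rowIdeal g) fun Λ hΛ ↦ ?_).imp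
    (fun h ↦ mem_familyIdeal.2 fun Λ hΛ ↦ (h hΛ).2)
    (fun h ↦ mem_familyIdeal.2 fun Λ hΛ ↦ (h hΛ).2)
  exact ((hprime hΛ).mem_or_mem (mem_familyIdeal.1 hfg Λ hΛ)).imp (⟨hΛ, ·⟩) (⟨hΛ, ·⟩)

theorem subset_of_familyIdeal_le (hZ : GrClosed m n Z) (hZ' : GrClosed m n Z')
    (h : familyIdeal (Fin (m + 1)) Z ≤ familyIdeal (Fin (m + 1)) Z') : Z' ⊆ Z := by
  obtain ⟨hdim, S, hS⟩ := grClosed_iff.1 hZ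
  have hSZ : ∀ g ∈ S, g ∈ familyIdeal (Fin (m + 1)) Z := by
    refine fun g hg ↦ mem_familyIdeal.2 fun Λ hΛ ↦ mem_rowIdeal.2 fun v hv ↦
      (hS v).1 (fun hli ↦ ?_) g hg
    have hle : Submodule.span KK (Set.range v.row) ≤ Λ :=
      Submodule.span_le.2 (Set.range_subset_iff.2 hv)
    rwa [Submodule.eq_of_le_of_finrank_eq hle
      ((finrank_span_eq_card hli).trans (by rw [hdim Λ hΛ, Fintype.card_fin]))]
  intro Λ hΛ
  obtain ⟨u, hu, rfl⟩ := exists_span_row_eq (α := Fin (m + 1))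
    ((hZ'.1 Λ hΛ).trans (Fintype.card_fin _).symm)
  exact (hS u).2 (fun g hg ↦ mem_rowIdeal.1 (mem_familyIdeal.1 (h (hSZ g hg)) _ hΛ) u
    fun a ↦ Submodule.subset_span ⟨a, rfl⟩) hu

theorem length_add_sq_le_trdeg_quotient_familyIdeal
    (p : LTSeries {W : Set (Submodule KK (Fin (n + 1) → KK)) // GrVariety m n W ∧ W ⊆ Z}) :
    ((p.length + (m + 1) ^ 2 : ℕ) : Cardinal) ≤ Algebra.trdeg KK
      (MvPolynomial (Fin (m + 1) × Fin (n + 1)) KK ⧸ familyIdeal (Fin (m + 1)) Z) := by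
  have hterm (i : Fin (p.length + 1)) : (((i : ℕ) + (m + 1) ^ 2 : ℕ) : Cardinal) ≤
      Algebra.trdeg KK (MvPolynomial (Fin (m + 1) × Fin (n + 1)) KK ⧸
        familyIdeal (Fin (m + 1)) (p i).1) := by
    induction i using Fin.induction with
    | zero =>
      obtain ⟨Λ, hΛ⟩ := (p 0).2.1.2.1
      simpa using card_sq_le_trdeg_quotient_familyIdeal (α := Fin (m + 1)) hΛ
        (by rw [(p 0).2.1.1.1 Λ hΛ, Fintype.card_fin])
    | succ i ih =>
      have hstep : p i.castSucc < p i.succ := p.step i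
      have := isPrime_familyIdeal (p i.castSucc).2.1
      have := isPrime_familyIdeal (p i.succ).2.1
      have hlt : familyIdeal (Fin (m + 1)) (p i.succ).1 <
          familyIdeal (Fin (m + 1)) (p i.castSucc).1 :=
        (familyIdeal_anti hstep.le).lt_of_not_ge fun hle ↦ hstep.not_ge
          (subset_of_familyIdeal_le (p i.castSucc).2.1.1 (p i.succ).2.1.1 hle)
      calc (((i.succ : ℕ) + (m + 1) ^ 2 : ℕ) : Cardinal)
          = ((i.castSucc : ℕ) + (m + 1) ^ 2 : ℕ) + 1 := by
            rw [Fin.val_succ, Fin.val_castSucc]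
            push_cast
            ring
        _ ≤ _ := (add_le_add_left ih 1).trans (trdeg_quotient_add_one_le_of_lt hlt)
  exact (hterm (Fin.last _)).trans (trdeg_quotient_le_of_le (familyIdeal_anti p.last.2.2))
end

section
variable {K σ : Type*}

theorem pderiv_eq_zero_of_dvd [CommRing K] [IsDomain K] {i : σ} {F G : MvPolynomial σ K}
    (hG : G ≠ 0) (hi : i ∉ G.vars) (h : F ∣ G) : pderiv i F = 0 := by
  classical
  obtain ⟨H, rfl⟩ := h
  refine pderiv_eq_zero_of_notMem_vars fun hiF ↦ hi ?_
  rw [vars_def, Multiset.mem_toFinset] at hiF ⊢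
  rw [degrees_mul_eq (left_ne_zero_of_mul hG) (right_ne_zero_of_mul hG)]
  exact Multiset.mem_add.2 (.inl hiF)

variable [Field K]

theorem eq_zero_of_eval_restrict_eq_zero [IsAlgClosed K] [Finite σ] {i : σ} {F : MvPolynomial σ K}
    (hF : pderiv i F ≠ 0) {H : MvPolynomial {j // j ≠ i} K}
    (hH : ∀ x : σ → K, eval x F = 0 → eval (fun j : {j // j ≠ i} ↦ x j) H = 0) : H = 0 := by
  classical
  by_contra hne
  have hmem : rename Subtype.val H ∈ (Ideal.span {F}).radical := by
    rw [← vanishingIdeal_zeroLocus_eq_radical (K := K), mem_vanishingIdeal_iff]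
    intro x hx
    rw [aeval_rename]
    exact hH x (hx F (Ideal.mem_span_singleton_self F))
  obtain ⟨N, hN⟩ := hmem
  rw [← map_pow, Ideal.mem_span_singleton] at hN
  refine hF (pderiv_eq_zero_of_dvd ?_ (fun hi ↦ ?_) hN)
  · exact (map_ne_zero_iff _ (rename_injective _ Subtype.val_injective)).2 (pow_ne_zero N hne)
  · obtain ⟨j, -, hj⟩ := Finset.mem_image.1 (vars_rename _ _ hi)
    exact j.2 hj

theorem eval_smul_of_isHomogeneous {R : Type*} [CommSemiring R] {F : MvPolynomial σ R} {d : ℕ}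
    (hF : F.IsHomogeneous d) (c : R) (x : σ → R) : eval (c • x) F = c ^ d * eval x F := by
  rw [eval_eq, eval_eq, Finset.mul_sum]
  refine Finset.sum_congr rfl fun m hm ↦ ?_
  have hdeg : m.degree = d := by
    rw [Finsupp.degree_eq_weight_one]
    exact hF (mem_support_iff.1 hm)
  have hc : ∏ i ∈ m.support, c ^ m i = c ^ d := by
    rw [Finset.prod_pow_eq_pow_sum, ← hdeg]
    rfl
  simp only [Pi.smul_apply, smul_eq_mul, mul_pow, Finset.prod_mul_distrib, hc]
  ring

theorem rep_mk_mem_iff {V : Type*} [AddCommGroup V] [Module K V] {Λ : Submodule K V} {x : V}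
    (hx : x ≠ 0) : (Projectivization.mk K x hx).rep ∈ Λ ↔ x ∈ Λ := by
  obtain ⟨c, hc⟩ := Projectivization.exists_smul_eq_mk_rep K x hx
  rw [← hc]
  exact Submodule.smul_mem_iff_of_isUnit Λ c.isUnit

theorem eval_rep_mk_eq_zero_iff {F : MvPolynomial σ K} {d : ℕ} (hF : F.IsHomogeneous d)
    {x : σ → K} (hx : x ≠ 0) : eval (Projectivization.mk K x hx).rep F = 0 ↔ eval x F = 0 := by
  obtain ⟨c, hc⟩ := Projectivization.exists_smul_eq_mk_rep K x hx
  rw [← hc, Units.smul_def, eval_smul_of_isHomogeneous hF,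
    mul_eq_zero_iff_left (pow_ne_zero d c.ne_zero)]
end

section
variable {K α ι : Type*} [Field K]

/-- The generic point of the locus of `α × ι` matrices cut out by the prime ideal `P`. -/
def genericMatrix (P : Ideal (MvPolynomial (α × ι) K)) :
    Matrix α ι (FractionRing (MvPolynomial (α × ι) K ⧸ P)) :=
  Matrix.of fun a j ↦ genericZero P (a, j)

theorem evalMatrix_genericMatrix_eq_zero_iff {P : Ideal (MvPolynomial (α × ι) K)}
    {f : MvPolynomial (α × ι) K} : evalMatrix (genericMatrix P) f = 0 ↔ f ∈ P :=
  aeval_genericZero_eq_zero_iff P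

variable {Z : Set (Submodule K (ι → K))}

theorem aeval_rowForm_genericMatrix [Infinite K] [Fintype α]
    [(familyIdeal α Z).IsPrime] {F : MvPolynomial ι K}
    (hF : ∀ Λ ∈ Z, ∀ x ∈ Λ, eval x F = 0) :
    aeval (rowForm (genericMatrix (familyIdeal α Z))) F = 0 := by
  refine eq_zero_of_eval_algebraMap_eq_zero (K := K) fun q ↦ ?_
  have hmem : bind₁ (fun j ↦ ∑ a, X (a, j) * C (q a)) F ∈ familyIdeal α Z := by
    refine mem_familyIdeal.2 fun Λ hΛ ↦ mem_rowIdeal.2 fun v hv ↦ ?_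
    rw [aeval_bind₁, ← hF Λ hΛ (∑ a, q a • v a) (sum_mem fun a _ ↦ Λ.smul_mem _ (hv a))]
    rw [aeval_eq_eval]
    congr 2
    ext j
    simp [mul_comm]
  rw [eval_aeval_rowForm, ← evalMatrix_genericMatrix_eq_zero_iff.2 hmem, aeval_bind₁]
  simp

variable [Finite ι]

theorem algebraicIndependent_genericMatrix [IsAlgClosed K] {F : MvPolynomial ι K} {i : ι}
    (hF : pderiv i F ≠ 0) (hcover : ∀ x, eval x F = 0 → ∃ Λ ∈ Z, x ∈ Λ) (a : α) :
    AlgebraicIndependent K fun j : {j // j ≠ i} ↦ genericMatrix (familyIdeal α Z) a j := by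
  refine algebraicIndependent_iff.2 fun H hH ↦ eq_zero_of_eval_restrict_eq_zero hF fun x hx ↦ ?_
  obtain ⟨Λ, hΛ, hxΛ⟩ := hcover x hx
  have hmem : rename (fun j : {j // j ≠ i} ↦ (a, (j : ι))) H ∈ familyIdeal α Z := by
    rw [← evalMatrix_genericMatrix_eq_zero_iff, aeval_rename]
    exact hH
  have hvanish := mem_rowIdeal.1 (mem_familyIdeal.1 hmem Λ hΛ) (Matrix.of fun _ ↦ x) fun _ ↦ hxΛ
  rwa [aeval_rename] at hvanish

theorem linearIndependent_row_genericMatrix [Fintype α] [(familyIdeal α Z).IsPrime]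
    {Λ : Submodule K (ι → K)} (hΛ : Λ ∈ Z) (hdim : Module.finrank K Λ = Fintype.card α) :
    LinearIndependent (FractionRing (MvPolynomial (α × ι) K ⧸ familyIdeal α Z))
      (genericMatrix (familyIdeal α Z)).row := by
  classical
  have := Fintype.ofFinite ι
  obtain ⟨u, hu, rfl⟩ := exists_span_row_eq hdim
  obtain ⟨q, hq⟩ := exists_mul_eq_one_of_linearIndependent_row hu
  refine linearIndependent_row_of_det_mul_ne_zero
    (q := q.map (algebraMap K (FractionRing (MvPolynomial (α × ι) K ⧸ familyIdeal α Z)))) ?_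
  rw [← evalMatrix_mulDet, Ne, evalMatrix_genericMatrix_eq_zero_iff]
  intro hmem
  have hvanish := mem_rowIdeal.1 (mem_familyIdeal.1 hmem _ hΛ) u
    fun a ↦ Submodule.subset_span ⟨a, rfl⟩
  simp [evalMatrix_mulDet, Algebra.algebraMap_self, hq] at hvanish
end

section
variable {m n d : ℕ} {F : MvPolynomial (Fin (n + 1)) KK}

theorem eval_eq_zero_of_mem_Fano (hF : F.IsHomogeneous d) (hd : d ≠ 0)
    {Λ : Submodule KK (Fin (n + 1) → KK)} (hΛ : Λ ∈ Fano m n (hyp F)) {x : Fin (n + 1) → KK}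
    (hx : x ∈ Λ) : eval x F = 0 := by
  obtain rfl | hx0 := eq_or_ne x 0
  · simpa [hd] using eval_smul_of_isHomogeneous hF 0 0
  · exact (eval_rep_mk_eq_zero_iff hF hx0).1 (hΛ.2 ((rep_mk_mem_iff hx0).2 hx))

theorem exists_mem_of_hyp_subset_DSet (hF : F.IsHomogeneous d)
    {Φ : Set (Submodule KK (Fin (n + 1) → KK))} (hΦ : Φ.Nonempty) (hcover : hyp F ⊆ DSet Φ)
    {x : Fin (n + 1) → KK} (hx : eval x F = 0) : ∃ Λ ∈ Φ, x ∈ Λ := by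
  obtain rfl | hx0 := eq_or_ne x 0
  · exact hΦ.imp fun Λ hΛ ↦ ⟨hΛ, Λ.zero_mem⟩
  · obtain ⟨Λ, hΛ, hxΛ⟩ := hcover ((eval_rep_mk_eq_zero_iff hF hx0).2 hx)
    exact ⟨Λ, hΛ, (rep_mk_mem_iff hx0).1 hxΛ⟩

theorem NonsingularK.exists_pderiv_ne_zero (hns : NonsingularK F) : ∃ i, pderiv i F ≠ 0 := by
  by_contra! h
  exact one_ne_zero (congrFun (hns 1 fun i ↦ by rw [h, map_zero]) 0)

theorem add_le_trdeg_quotient_familyIdeal (hd : 2 ≤ d) (hF : F.IsHomogeneous d)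
    (hns : NonsingularK F) {Φ : Set (Submodule KK (Fin (n + 1) → KK))} (hΦ : GrVariety 2 n Φ)
    (hsub : Φ ⊆ Fano 2 n (hyp F)) (hcover : hyp F ⊆ DSet Φ) :
    d + 3 ≤ n ∧ Algebra.trdeg KK (MvPolynomial (Fin 3 × Fin (n + 1)) KK ⧸ familyIdeal (Fin 3) Φ) +
      ((2 * (d + 1) : ℕ) : Cardinal) ≤ ((3 * (n + 1) : ℕ) : Cardinal) := by
  set P := familyIdeal (Fin 3) Φ
  have : P.IsPrime := isPrime_familyIdeal hΦ
  obtain ⟨Λ, hΛ⟩ := hΦ.2.1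
  obtain ⟨i, hi⟩ := hns.exists_pderiv_ne_zero
  obtain ⟨hdn, htr⟩ := trdeg_add_le_of_algebraicIndependent hd hF hns
    (aeval_rowForm_genericMatrix fun Λ hΛ x hx ↦ eval_eq_zero_of_mem_Fano hF (by lia) (hsub hΛ) hx)
    (linearIndependent_row_genericMatrix hΛ (by rw [hΦ.1.1 Λ hΛ, Fintype.card_fin]))
    (adjoin_range_genericZero P)
    (algebraicIndependent_genericMatrix hi
      (fun x hx ↦ exists_mem_of_hyp_subset_DSet hF ⟨Λ, hΛ⟩ hcover hx) 2)
  rw [Fintype.card_fin] at hdn htr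
  refine ⟨by lia, le_trans ?_ htr⟩
  gcongr
  exact trdeg_le_of_injective (IsScalarTower.toAlgHom KK _ _) (IsFractionRing.injective _ _)
end

theorem statement15_general (n d : ℕ) (hd : 2 ≤ d)
    (F : MvPolynomial (Fin (n + 1)) KK) (hF : F.IsHomogeneous d) (hns : NonsingularK F)
    (Φ : Set (Submodule KK (Fin (n + 1) → KK))) (hΦ : GrVariety 2 n Φ)
    (hsub : Φ ⊆ Fano 2 n (hyp F)) (hcover : hyp F ⊆ DSet Φ) :
    d + 3 ≤ n ∧ grDim 2 n Φ ≤ (((3 * n - 2 * d - 8 : ℕ) : ENat) : WithBot ENat) := by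
  obtain ⟨hdn, htr⟩ := add_le_trdeg_quotient_familyIdeal hd hF hns hΦ hsub hcover
  refine ⟨hdn, iSup_le fun p ↦ ?_⟩
  have hlength := (add_le_add_left (length_add_sq_le_trdeg_quotient_familyIdeal p) _).trans htr
  have hlength' : p.length + (2 + 1) ^ 2 + 2 * (d + 1) ≤ 3 * (n + 1) := by exact_mod_cast hlength
  have : p.length ≤ 3 * n - 2 * d - 8 := by lia
  exact_mod_cast this

/-- **Lemma 11.** Let X ⊂ Pⁿ be a non-singular quartic hypersurface with n ≥ 6.
Then any geometrically integral component Φ ⊆ F₂(X) with X = D(Φ) satisfies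
dim Φ ≤ 3 if n = 6 and dim Φ ≤ 3n - 16 if n ≥ 7. -/
theorem statement15 (n : ℕ) (hn : 6 ≤ n)
    (F : MvPolynomial (Fin (n + 1)) KK) (hF : F.IsHomogeneous 4)
    (hns : NonsingularK F)
    (Φ : Set (Submodule KK (Fin (n + 1) → KK)))
    (hΦ : GrVariety 2 n Φ) (hsub : Φ ⊆ Fano 2 n (hyp F))
    (hcover : DSet Φ = hyp F) :
    (n = 6 → grDim 2 n Φ ≤ ((3 : ENat) : WithBot ENat)) ∧
    (7 ≤ n → grDim 2 n Φ ≤ (((3 * n - 16 : ℕ) : ENat) : WithBot ENat)) := by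
  obtain ⟨hn, hdim⟩ :=
    statement15_general n 4 (by norm_num) F hF hns Φ hΦ hsub hcover.ge
  exact ⟨fun h ↦ by lia, fun _ ↦ by simpa [Nat.sub_sub] using hdim⟩

end
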